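/- arXiv:1107.2876 — 3 statements merged into one kernel-verified Lean document; each statement's English description precedes it below -/
import Mathlib

section
/- Let ν ∈ (0,1], λ_α, λ_β > 0, t > 0, and define the Mittag–Leffler function E_{ν,1}(x) = Σ_{n=0}^∞ x^n / Γ(νn + 1). Let u ∈ [0,1) be such that e^{λ_α(u−1)} / (1 − e^{λ_α(u−1)}) < 1. Then the probability generating function of the homogeneous Poisson process N_α subordinated to an independent fractional linear birth process Y^ν with one progenitor satisfies Σ_{k=0}^∞ u^k Σ_{r=1}^∞ e^{−λ_α r} (λ_α r)^k / k! · Σ_{j=1}^{r} C(r−1, j−1) (−1)^{j−1} E_{ν,1}(−λ_β j t^ν) = Σ_{j=1}^∞ (−1)^{j−1} (e^{λ_α(u−1)} / (1 − e^{λ_α(u−1)}))^j · E_{ν,1}(−λ_β j t^ν). -/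
open Real

/-- The Mittag–Leffler function `E_{ν,1}(x) = Σ_{n=0}^∞ x^n / Γ(νn + 1)`. -/
noncomputable def mittagLeffler (ν x : ℝ) : ℝ :=
  ∑' n : ℕ, x ^ n / Real.Gamma (ν * n + 1)

/-
Summing over `k` first turns the Poisson weights into powers of `z = exp (lα * (u - 1))`, and
summing over `r` before `j` turns the binomial weights into powers of `q = z / (1 - z)`. As `q < 1`,
both interchanges are justified once `E_{ν,1}` is known to be bounded on the negative axis.

For that bound, discretise. Since `C(a + n, n) ~ n ^ a / Γ(a + 1)`, the number `E_{ν,1}(x)` is the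
limit of `D_n(x / n ^ ν)`, where `D_n(x) = ∑ₘ C(νm + n, n) xᵐ` is the coefficient of `X ^ n` in
`(1 - X) ^ (ν - 1) / ((1 - X) ^ ν - x)`. For `0 ≤ ν ≤ 1` all coefficients of `(1 - X) ^ ν` except
the constant one are nonpositive, and a series of this sign pattern has a reciprocal with
nonnegative coefficients. For `-1 < x ≤ 0` this gives `0 ≤ D_n(x)`, and, applied to
`1 / (1 - X) - ∑ D_n(x) X ^ n = -x / ((1 - X) ((1 - X) ^ ν - x))`, also `D_n(x) ≤ 1`.
-/

open Filter Topology PowerSeries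

section Multichoose

variable {R : Type*} [CommRing R] [BinomialRing R]

lemma factorial_mul_multichoose (a : R) (n : ℕ) :
    (n.factorial : R) * Ring.multichoose a n = (ascPochhammer R n).eval a := by
  rw [← nsmul_eq_mul, Ring.factorial_nsmul_multichoose_eq_ascPochhammer,
    Polynomial.ascPochhammer_smeval_eq_eval]

lemma prod_range_add_eq_factorial_mul_multichoose (a : R) (n : ℕ) :
    ∏ j ∈ Finset.range n, (a + j) = n.factorial * Ring.multichoose a n := by
  rw [factorial_mul_multichoose]
  induction n with
  | zero => simp
  | succ n ih => rw [Finset.prod_range_succ, ih, ascPochhammer_succ_eval]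

lemma succ_mul_multichoose_succ (a : R) (n : ℕ) :
    ((n : R) + 1) * Ring.multichoose a (n + 1) = a * Ring.multichoose (a + 1) n := by
  have := BinomialRing.toIsAddTorsionFree (R := R)
  refine nsmul_right_injective n.factorial_ne_zero ?_
  have h := factorial_mul_multichoose a (n + 1)
  rw [ascPochhammer_succ_left, Polynomial.eval_mul, Polynomial.eval_comp, Polynomial.eval_add,
    Polynomial.eval_X, Polynomial.eval_one, ← factorial_mul_multichoose, Nat.factorial_succ] at h
  push_cast at h
  simp only [nsmul_eq_mul]
  linear_combination h

/-- The formal power series `(1 - X) ^ (-a)`. -/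
noncomputable def multichooseSeries (a : R) : R⟦X⟧ :=
  mk (Ring.multichoose a)

@[simp]
lemma coeff_multichooseSeries (a : R) (n : ℕ) :
    coeff n (multichooseSeries a) = Ring.multichoose a n :=
  coeff_mk n _

lemma multichooseSeries_eq_rescale_binomialSeries (a : R) :
    multichooseSeries a = rescale (-1) (binomialSeries R (-a)) := by
  ext n
  rw [coeff_multichooseSeries, coeff_rescale, binomialSeries_coeff, Ring.choose_neg',
    Units.smul_def, zsmul_eq_mul, Int.cast_negOnePow_natCast, smul_eq_mul, mul_one, ← mul_assoc,
    ← mul_pow, neg_one_mul, neg_neg, one_pow, one_mul]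

lemma multichooseSeries_add (a b : R) :
    multichooseSeries (a + b) = multichooseSeries a * multichooseSeries b := by
  simp only [multichooseSeries_eq_rescale_binomialSeries, neg_add, binomialSeries_add, map_mul]

variable [LinearOrder R] [IsStrictOrderedRing R]

lemma multichoose_nonneg {a : R} (ha : 0 ≤ a) (n : ℕ) : 0 ≤ Ring.multichoose a n := by
  induction n generalizing a with
  | zero => simp
  | succ n ih =>
    refine nonneg_of_mul_nonneg_right (a := (n : R) + 1) ?_ (by positivity)
    rw [succ_mul_multichoose_succ]
    exact mul_nonneg ha (ih (by positivity))

lemma multichoose_neg_succ_nonpos {a : R} (ha : a ∈ Set.Icc 0 1) (n : ℕ) :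
    Ring.multichoose (-a) (n + 1) ≤ 0 := by
  refine nonpos_of_mul_nonpos_right (a := (n : R) + 1) ?_ (by positivity)
  rw [succ_mul_multichoose_succ]
  exact mul_nonpos_of_nonpos_of_nonneg (neg_nonpos.2 ha.1)
    (multichoose_nonneg (by linarith [ha.2]) n)

end Multichoose

lemma hasSum_multichoose_mul_pow (a : ℝ) {s : ℝ} (hs : |s| < 1) :
    HasSum (fun n => Ring.multichoose a n * s ^ n) ((1 - s) ^ (-a)) := by
  have h := (Real.one_div_one_sub_rpow_hasFPowerSeriesOnBall_zero a).hasSum (y := s)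
    (by simpa [enorm_eq_nnnorm] using! hs)
  rw [Real.rpow_neg (by linarith [le_abs_self s])]
  simpa [Ring.multichoose_eq, mul_comm] using h

lemma multichoose_add_one_mul_pow_le {a s : ℝ} (ha : 0 ≤ a) (hs0 : 0 ≤ s) (hs1 : s < 1) (n : ℕ) :
    Ring.multichoose (a + 1) n * s ^ n ≤ (1 - s) ^ (-a) := by
  have hsum : Ring.multichoose (a + 1) n = ∑ i ∈ Finset.range (n + 1), Ring.multichoose a i := by
    rw [← coeff_multichooseSeries, multichooseSeries_add, coeff_mul,
      Finset.Nat.sum_antidiagonal_eq_sum_range_succ_mk]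
    simp only [coeff_multichooseSeries, Ring.multichoose_one, mul_one]
  calc Ring.multichoose (a + 1) n * s ^ n
      = ∑ i ∈ Finset.range (n + 1), Ring.multichoose a i * s ^ n := by rw [hsum, Finset.sum_mul]
    _ ≤ ∑ i ∈ Finset.range (n + 1), Ring.multichoose a i * s ^ i := by
        refine Finset.sum_le_sum fun i hi => mul_le_mul_of_nonneg_left ?_ (multichoose_nonneg ha i)
        exact pow_le_pow_of_le_one hs0 hs1.le (Finset.mem_range_succ_iff.1 hi)
    _ ≤ (1 - s) ^ (-a) :=
        sum_le_hasSum _ (fun i _ => mul_nonneg (multichoose_nonneg ha i) (pow_nonneg hs0 i))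
          (hasSum_multichoose_mul_pow a (by rwa [abs_of_nonneg hs0]))

lemma multichoose_add_one_le_exp_mul_rpow {a K : ℝ} (ha : 0 ≤ a) (hK : 0 < K) (n : ℕ) :
    Ring.multichoose (a + 1) n ≤ Real.exp K * (1 + n / K) ^ a := by
  rcases n.eq_zero_or_pos with rfl | hn
  · simpa using hK.le
  have : (0 : ℝ) < n := Nat.cast_pos.2 hn
  -- With this `s`, `s ^ (-n) = (1 + K / n) ^ n ≤ exp K` uniformly in `n`.
  set s : ℝ := n / (n + K)
  have hs0 : 0 < s := by positivity
  have hs1 : 1 - s = (1 + n / K)⁻¹ := by simp only [s]; field_simp; ring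
  have hexp : Real.exp (-K) ≤ s ^ n := by
    have h : s⁻¹ ≤ Real.exp (K / n) := by
      refine le_of_eq_of_le ?_ (Real.add_one_le_exp (K / n))
      simp only [s]; field_simp; ring
    calc Real.exp (-K) = (Real.exp (K / n))⁻¹ ^ n := by
          rw [← Real.exp_neg, ← Real.exp_nat_mul]; field_simp
      _ ≤ s ^ n := by gcongr; exact inv_le_of_inv_le₀ hs0 h
  have hle := multichoose_add_one_mul_pow_le ha hs0.le (sub_pos.1 (by rw [hs1]; positivity)) n
  rw [hs1, Real.rpow_neg (by positivity), Real.inv_rpow (by positivity), inv_inv] at hle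
  calc Ring.multichoose (a + 1) n
      = Real.exp K * (Ring.multichoose (a + 1) n * Real.exp (-K)) := by
        rw [Real.exp_neg]; field_simp
    _ ≤ Real.exp K * (Ring.multichoose (a + 1) n * s ^ n) := by
        have := multichoose_nonneg (a := a + 1) (by positivity) n
        gcongr
    _ ≤ Real.exp K * (1 + n / K) ^ a := by gcongr

lemma tendsto_multichoose_add_one_div_rpow {a : ℝ} (ha : 0 ≤ a) :
    Tendsto (fun n : ℕ => Ring.multichoose (a + 1) n / (n : ℝ) ^ a) atTop
      (𝓝 (Real.Gamma (a + 1))⁻¹) := by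
  rcases ha.eq_or_lt with rfl | ha
  · simp
  have h := ((Real.GammaSeq_tendsto_Gamma a).const_mul a).inv₀
    (mul_ne_zero ha.ne' (Real.Gamma_pos_of_pos ha).ne')
  rw [Real.Gamma_add_one ha.ne']
  refine h.congr fun n => ?_
  have hn : (n.factorial : ℝ) ≠ 0 := by positivity
  have hprod : ∏ j ∈ Finset.range (n + 1), (a + j) =
      a * (n.factorial * Ring.multichoose (a + 1) n) := by
    rw [prod_range_add_eq_factorial_mul_multichoose, Nat.factorial_succ]
    push_cast
    linear_combination (n.factorial : ℝ) * succ_mul_multichoose_succ a n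
  rw [Real.GammaSeq, hprod]
  field_simp

lemma coeff_nonneg_of_coeff_mul_nonneg {R : Type*} [Ring R] [LinearOrder R]
    [IsStrictOrderedRing R] {φ ψ : R⟦X⟧} (hφ0 : 0 < coeff 0 φ) (hφ : ∀ n, coeff (n + 1) φ ≤ 0)
    (hφψ : ∀ n, 0 ≤ coeff n (φ * ψ)) (n : ℕ) : 0 ≤ coeff n ψ := by
  induction n using Nat.strong_induction_on with
  | _ n ih =>
    have hn := hφψ n
    cases n with
    | zero =>
      rw [coeff_mul, Finset.Nat.antidiagonal_zero, Finset.sum_singleton] at hn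
      exact nonneg_of_mul_nonneg_right hn hφ0
    | succ n =>
      rw [coeff_mul, Finset.Nat.sum_antidiagonal_succ] at hn
      have htail : ∑ ij ∈ Finset.HasAntidiagonal.antidiagonal n,
          coeff (ij.1 + 1) φ * coeff ij.2 ψ ≤ 0 :=
        Finset.sum_nonpos fun ij hij => mul_nonpos_of_nonpos_of_nonneg (hφ _)
          (ih _ (Nat.lt_succ_of_le (Finset.HasAntidiagonal.antidiagonal.snd_le hij)))
      exact nonneg_of_mul_nonneg_right (hn.trans (add_le_of_nonpos_right htail)) hφ0

/-- The discrete analogue `∑ₘ C(νm + n, n) xᵐ` of the Mittag–Leffler function, in which the binomial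
coefficient, written `Ring.multichoose (ν * m + 1) n` for real `ν`, takes the place of
`n ^ (ν * m) / Γ(ν * m + 1)`. The series converges for `|x| < 1`. -/
noncomputable def discreteMittagLeffler (ν x : ℝ) (n : ℕ) : ℝ :=
  ∑' m : ℕ, x ^ m * Ring.multichoose (ν * m + 1) n

section DiscreteMittagLeffler

variable {ν x : ℝ}

lemma norm_pow_mul_multichoose_le {K : ℝ} (hν : 0 ≤ ν) (hK : 0 < K) (n m : ℕ) :
    ‖x ^ m * Ring.multichoose (ν * m + 1) n‖ ≤ Real.exp K * (|x| * (1 + n / K) ^ ν) ^ m := by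
  rw [norm_mul, norm_pow, Real.norm_eq_abs,
    Real.norm_of_nonneg (multichoose_nonneg (by positivity) n)]
  calc |x| ^ m * Ring.multichoose (ν * m + 1) n
      ≤ |x| ^ m * (Real.exp K * (1 + n / K) ^ (ν * m)) := by
        gcongr
        exact multichoose_add_one_le_exp_mul_rpow (by positivity) hK n
    _ = Real.exp K * (|x| * (1 + n / K) ^ ν) ^ m := by
        rw [Real.rpow_mul_natCast (by positivity)]
        ring

lemma hasSum_discreteMittagLeffler (hν : 0 ≤ ν) (hx : |x| < 1) (n : ℕ) :
    HasSum (fun m : ℕ => x ^ m * Ring.multichoose (ν * m + 1) n)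
      (discreteMittagLeffler ν x n) := by
  have hlim : Tendsto (fun K : ℝ => |x| * (1 + n / K) ^ ν) atTop (𝓝 |x|) := by
    simpa using (((tendsto_const_nhds (x := (n : ℝ))).div_atTop tendsto_id).const_add 1
      |>.rpow_const (p := ν) (.inr hν)).const_mul |x|
  obtain ⟨K, hK1, hK⟩ := ((hlim.eventually_lt_const hx).and (eventually_gt_atTop 0)).exists
  exact (Summable.of_norm_bounded ((summable_geometric_of_lt_one (by positivity) hK1).mul_left _)
    (norm_pow_mul_multichoose_le hν hK n)).hasSum

open scoped PowerSeries.WithPiTopology in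
lemma multichooseSeries_sub_C_mul_mk_discreteMittagLeffler (hν : 0 ≤ ν) (hx : |x| < 1) :
    (multichooseSeries (-ν) - C x) * mk (discreteMittagLeffler ν x) =
      multichooseSeries (1 - ν) := by
  have hsum : HasSum (fun m : ℕ => C (x ^ m) * multichooseSeries (ν * m + 1))
      (mk (discreteMittagLeffler ν x)) := by
    refine PowerSeries.WithPiTopology.hasSum_iff_hasSum_coeff ℝ |>.2 fun n => ?_
    simpa only [coeff_C_mul, coeff_multichooseSeries, coeff_mk] using
      hasSum_discreteMittagLeffler hν hx n
  have hshift : HasSum (fun m : ℕ => C (x ^ m) * multichooseSeries (ν * m + 1 - ν))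
      (C x * mk (discreteMittagLeffler ν x) + multichooseSeries (1 - ν)) := by
    rw [← hasSum_nat_add_iff' 1]
    simp only [Finset.sum_range_one, pow_zero, map_one, one_mul, Nat.cast_zero, mul_zero, zero_add,
      add_sub_cancel_right]
    refine (hsum.mul_left (C x)).congr_fun fun m => ?_
    rw [Nat.cast_succ, show ν * ((m : ℝ) + 1) + 1 - ν = ν * m + 1 by ring, pow_succ', map_mul,
      mul_assoc]
  have hmul : HasSum (fun m : ℕ => C (x ^ m) * multichooseSeries (ν * m + 1 - ν))
      (multichooseSeries (-ν) * mk (discreteMittagLeffler ν x)) := by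
    refine (hsum.mul_left (multichooseSeries (-ν))).congr_fun fun m => ?_
    rw [sub_eq_neg_add, multichooseSeries_add, mul_left_comm]
  rw [sub_mul, hmul.unique hshift, add_sub_cancel_left]

lemma discreteMittagLeffler_mem_Icc (hν : ν ∈ Set.Icc 0 1) (hx : x ∈ Set.Ioc (-1) 0) (n : ℕ) :
    discreteMittagLeffler ν x n ∈ Set.Icc 0 1 := by
  set φ : ℝ⟦X⟧ := multichooseSeries (-ν) - C x with hφ
  set D : ℝ⟦X⟧ := mk (discreteMittagLeffler ν x)
  have hφ0 : 0 < coeff 0 φ := by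
    rw [hφ, map_sub, coeff_multichooseSeries, Ring.multichoose_zero_right, coeff_zero_C]
    linarith [hx.2]
  have hφ_succ (k : ℕ) : coeff (k + 1) φ ≤ 0 := by
    simpa [hφ, coeff_C] using multichoose_neg_succ_nonpos hν k
  have hφD : φ * D = multichooseSeries (1 - ν) :=
    multichooseSeries_sub_C_mul_mk_discreteMittagLeffler hν.1 (abs_lt.2 ⟨hx.1, by linarith [hx.2]⟩)
  have hφD' : φ * (multichooseSeries 1 - D) = C (-x) * multichooseSeries 1 := by
    rw [mul_sub, hφD, sub_eq_neg_add 1 ν, multichooseSeries_add, map_neg]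
    ring
  constructor
  · have h := coeff_nonneg_of_coeff_mul_nonneg (ψ := D) hφ0 hφ_succ (fun k => ?_) n
    · simpa [D] using h
    · rw [hφD, coeff_multichooseSeries]
      exact multichoose_nonneg (sub_nonneg.2 hν.2) k
  · have h := coeff_nonneg_of_coeff_mul_nonneg hφ0 hφ_succ (fun k => ?_) n
      (ψ := multichooseSeries 1 - D)
    · simpa [D] using h
    · simpa [hφD'] using hx.2

lemma tendsto_discreteMittagLeffler (hν : 0 < ν) (x : ℝ) :
    Tendsto (fun n : ℕ => discreteMittagLeffler ν (x / (n : ℝ) ^ ν) n) atTop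
      (𝓝 (mittagLeffler ν x)) := by
  have hlim : Tendsto (fun K : ℝ => |x| * (2 / K) ^ ν) atTop (𝓝 0) := by
    simpa [Real.zero_rpow hν.ne'] using ((tendsto_const_nhds (x := (2 : ℝ))).div_atTop tendsto_id
      |>.rpow_const (p := ν) (.inr hν.le)).const_mul |x|
  obtain ⟨K, hxK, hK⟩ : ∃ K : ℝ, |x| * (2 / K) ^ ν < 1 / 2 ∧ 0 < K :=
    ((hlim.eventually_lt_const one_half_pos).and (eventually_gt_atTop 0)).exists
  refine tendsto_tsum_of_dominated_convergence (bound := fun m => Real.exp K * (1 / 2) ^ m)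
    (summable_geometric_two.mul_left _) (fun m => ?_) ?_
  · refine ((tendsto_multichoose_add_one_div_rpow (a := ν * m) (by positivity)).const_mul
      (x ^ m)).congr fun n => ?_
    rw [Real.rpow_mul_natCast n.cast_nonneg, div_pow]
    ring
  · filter_upwards [tendsto_natCast_atTop_atTop.eventually_ge_atTop K] with n hn m
    have hn0 : (0 : ℝ) < n := hK.trans_le hn
    refine (norm_pow_mul_multichoose_le hν.le hK n m).trans ?_
    gcongr
    calc |x / (n : ℝ) ^ ν| * (1 + n / K) ^ ν
        = |x| * ((1 + n / K) / n) ^ ν := by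
          rw [abs_div, abs_of_nonneg (by positivity : 0 ≤ (n : ℝ) ^ ν),
            Real.div_rpow (by positivity) hn0.le]
          ring
      _ ≤ |x| * (2 / K) ^ ν := by
          have : (1 + n / K) / n ≤ 2 / K := by
            rw [div_le_div_iff₀ hn0 hK]
            field_simp
            linarith
          gcongr
      _ ≤ 1 / 2 := hxK.le

end DiscreteMittagLeffler

lemma mittagLeffler_mem_Icc {ν x : ℝ} (hν : ν ∈ Set.Ioc 0 1) (hx : x ≤ 0) :
    mittagLeffler ν x ∈ Set.Icc 0 1 := by
  refine isClosed_Icc.mem_of_tendsto (tendsto_discreteMittagLeffler hν.1 x) ?_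
  have hlim : Tendsto (fun n : ℕ => x / (n : ℝ) ^ ν) atTop (𝓝 0) :=
    tendsto_const_nhds.div_atTop ((tendsto_rpow_atTop hν.1).comp tendsto_natCast_atTop_atTop)
  filter_upwards [hlim.eventually_const_lt (by norm_num : (-1 : ℝ) < 0)] with n hn
  exact discreteMittagLeffler_mem_Icc (Set.Ioc_subset_Icc_self hν)
    ⟨hn, div_nonpos_of_nonpos_of_nonneg hx (by positivity)⟩ n

lemma hasSum_tsum_mul_of_nonneg {ι κ : Type*} {w : ι → κ → ℝ} {c p : ι → ℝ}
    (hw : ∀ i k, 0 ≤ w i k) (hc : ∀ i, HasSum (w i) (c i)) (hp : Summable fun i => c i * |p i|) :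
    HasSum (fun k => ∑' i, w i k * p i) (∑' i, c i * p i) := by
  have habs : Summable fun q : ι × κ => w q.1 q.2 * |p q.1| := by
    rw [summable_prod_of_nonneg fun q => mul_nonneg (hw q.1 q.2) (abs_nonneg (p q.1))]
    exact ⟨fun i => (hc i).summable.mul_right |p i|,
      hp.congr fun i => ((hc i).mul_right |p i|).tsum_eq.symm⟩
  have hsum : Summable fun q : ι × κ => w q.1 q.2 * p q.1 :=
    .of_norm (habs.congr fun q => by
      rw [norm_mul, Real.norm_of_nonneg (hw q.1 q.2), Real.norm_eq_abs])
  have htotal : ∑' q : ι × κ, w q.1 q.2 * p q.1 = ∑' i, c i * p i :=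
    hsum.tsum_prod.trans (tsum_congr fun i => ((hc i).mul_right (p i)).tsum_eq)
  have hswap : HasSum (fun q : κ × ι => w q.2 q.1 * p q.2) (∑' i, c i * p i) :=
    htotal ▸ (Equiv.prodComm κ ι).hasSum_iff.2 hsum.hasSum
  exact hswap.prod_fiberwise fun k => (hswap.summable.prod_factor k).hasSum

lemma hasSum_pow_mul_tsum_poisson {ι : Type*} {μ p : ι → ℝ} {u : ℝ} (hμ : ∀ i, 0 ≤ μ i)
    (hu : 0 ≤ u) (hp : Summable fun i => Real.exp (μ i * (u - 1)) * |p i|) :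
    HasSum (fun k : ℕ => u ^ k * ∑' i, Real.exp (-μ i) * μ i ^ k / k.factorial * p i)
      (∑' i, Real.exp (μ i * (u - 1)) * p i) := by
  have hpoisson (i : ι) : HasSum (fun k : ℕ => u ^ k * (Real.exp (-μ i) * μ i ^ k / k.factorial))
      (Real.exp (μ i * (u - 1))) := by
    have h := (NormedSpace.expSeries_div_hasSum_exp (u * μ i)).mul_left (Real.exp (-μ i))
    rw [← Real.exp_eq_exp_ℝ, ← Real.exp_add, show -μ i + u * μ i = μ i * (u - 1) by ring] at h
    exact h.congr_fun fun k => by rw [mul_pow]; ring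
  refine (hasSum_tsum_mul_of_nonneg (fun i k => ?_) hpoisson hp).congr_fun fun k => ?_
  · have := hμ i
    positivity
  · simp only [mul_assoc, tsum_mul_left]

section EulerTransform

variable {f : ℕ → ℝ} {z : ℝ}

lemma hasSum_choose_mul_pow_succ (j : ℕ) (hz : |z| < 1) :
    HasSum (fun r : ℕ => (r.choose j : ℝ) * z ^ (r + 1)) ((z / (1 - z)) ^ (j + 1)) := by
  have h := (hasSum_choose_mul_geometric_of_norm_lt_one j hz).mul_left (z ^ (j + 1))
  rw [mul_one_div, ← div_pow] at h
  rw [← hasSum_nat_add_iff' j, Finset.sum_eq_zero, sub_zero]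
  · exact h.congr_fun fun r => by ring
  · intro r hr
    rw [Nat.choose_eq_zero_of_lt (Finset.mem_range.1 hr), Nat.cast_zero, zero_mul]

lemma hasSum_pow_succ_mul_sum_choose (hz0 : 0 ≤ z) (hz1 : z < 1)
    (hf : Summable fun j => (z / (1 - z)) ^ (j + 1) * |f j|) :
    HasSum (fun r : ℕ => z ^ (r + 1) * ∑ j ∈ Finset.range (r + 1), (r.choose j : ℝ) * f j)
      (∑' j, (z / (1 - z)) ^ (j + 1) * f j) := by
  have h := hasSum_tsum_mul_of_nonneg (fun j r => by positivity)
    (fun j => hasSum_choose_mul_pow_succ j (by rwa [abs_of_nonneg hz0])) hf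
  refine h.congr_fun fun r => ?_
  rw [tsum_eq_sum (s := Finset.range (r + 1)), Finset.mul_sum]
  · exact Finset.sum_congr rfl fun j _ => by ring
  · intro j hj
    rw [Nat.choose_eq_zero_of_lt (by simpa using hj), Nat.cast_zero, zero_mul, zero_mul]

lemma summable_pow_succ_mul_abs_sum_choose (hz0 : 0 ≤ z) (hz1 : z < 1)
    (hf : Summable fun j => (z / (1 - z)) ^ (j + 1) * |f j|) :
    Summable fun r : ℕ =>
      z ^ (r + 1) * |∑ j ∈ Finset.range (r + 1), (r.choose j : ℝ) * f j| := by
  have h := (hasSum_pow_succ_mul_sum_choose (f := fun j => |f j|) hz0 hz1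
    (by simpa only [abs_abs] using hf)).summable
  refine .of_nonneg_of_le (fun r => by positivity) (fun r => ?_) h
  gcongr
  refine (Finset.abs_sum_le_sum_abs _ _).trans_eq ?_
  simp only [abs_mul, Nat.abs_cast]

end EulerTransform

lemma hasSum_pow_mul_tsum_poisson_mul_sum_choose {lα u : ℝ} {f : ℕ → ℝ} (hα : 0 < lα)
    (hu : u ∈ Set.Ico 0 1)
    (hf : Summable fun j =>
      (Real.exp (lα * (u - 1)) / (1 - Real.exp (lα * (u - 1)))) ^ (j + 1) * |f j|) :
    HasSum (fun k : ℕ => u ^ k *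
        ∑' r : ℕ, Real.exp (-(lα * ((r : ℝ) + 1))) * (lα * ((r : ℝ) + 1)) ^ k / k.factorial *
          ∑ j ∈ Finset.range (r + 1), (r.choose j : ℝ) * f j)
      (∑' j, (Real.exp (lα * (u - 1)) / (1 - Real.exp (lα * (u - 1)))) ^ (j + 1) * f j) := by
  have hz1 : Real.exp (lα * (u - 1)) < 1 :=
    Real.exp_lt_one_iff.2 (mul_neg_of_pos_of_neg hα (sub_neg.2 hu.2))
  have hz (r : ℕ) :
      Real.exp (lα * ((r : ℝ) + 1) * (u - 1)) = Real.exp (lα * (u - 1)) ^ (r + 1) := by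
    rw [mul_right_comm, mul_comm, ← Nat.cast_succ, Real.exp_nat_mul]
  have hpgf := hasSum_pow_mul_tsum_poisson (μ := fun r : ℕ => lα * ((r : ℝ) + 1))
    (fun r => by positivity) hu.1 (by
      simpa only [hz] using summable_pow_succ_mul_abs_sum_choose (Real.exp_nonneg _) hz1 hf)
  simp only [hz] at hpgf
  exact (hasSum_pow_succ_mul_sum_choose (Real.exp_nonneg _) hz1 hf).tsum_eq ▸ hpgf

/-- the probability generating function of the Poisson process
subordinated to an independent fractional linear birth process:
`Σ_k u^k Σ_{r≥1} e^{−λ_α r}(λ_α r)^k/k! Σ_{j=1}^r C(r−1,j−1)(−1)^{j−1} E_{ν,1}(−λ_β j t^ν)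
 = Σ_{j≥1} (−1)^{j−1} (e^{λ_α(u−1)}/(1−e^{λ_α(u−1)}))^j E_{ν,1}(−λ_β j t^ν)`.
(The inner index `r ≥ 1` is written as `r + 1`, `r : ℕ`, and `j ≥ 1` as `j + 1`.) -/
theorem pgf_poisson_sub_fractional_birth (ν lα lβ t u : ℝ) (hν : ν ∈ Set.Ioc (0 : ℝ) 1)
    (hα : 0 < lα) (hβ : 0 < lβ) (ht : 0 < t) (hu : u ∈ Set.Ico (0 : ℝ) 1)
    (hq : Real.exp (lα * (u - 1)) / (1 - Real.exp (lα * (u - 1))) < 1) :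
    ∑' k : ℕ, u ^ k *
      ∑' r : ℕ, Real.exp (-lα * ((r : ℝ) + 1)) * (lα * ((r : ℝ) + 1)) ^ k / (Nat.factorial k) *
        ∑ j ∈ Finset.range (r + 1), (r.choose j : ℝ) * (-1) ^ j *
          mittagLeffler ν (-lβ * ((j : ℝ) + 1) * t ^ ν) =
    ∑' j : ℕ, (-1 : ℝ) ^ j *
      (Real.exp (lα * (u - 1)) / (1 - Real.exp (lα * (u - 1)))) ^ (j + 1) *
        mittagLeffler ν (-lβ * ((j : ℝ) + 1) * t ^ ν) := by
  set z : ℝ := Real.exp (lα * (u - 1))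
  have hz1 : z < 1 := Real.exp_lt_one_iff.2 (mul_neg_of_pos_of_neg hα (sub_neg.2 hu.2))
  have hq0 : 0 ≤ z / (1 - z) := div_nonneg (Real.exp_nonneg _) (sub_nonneg.2 hz1.le)
  set f : ℕ → ℝ := fun j => (-1) ^ j * mittagLeffler ν (-lβ * ((j : ℝ) + 1) * t ^ ν) with hf
  have hf1 (j : ℕ) : |f j| ≤ 1 := by
    have hx : -lβ * ((j : ℝ) + 1) * t ^ ν ≤ 0 := by
      simp only [neg_mul, Left.neg_nonpos_iff]
      positivity
    obtain ⟨h0, h1⟩ := mittagLeffler_mem_Icc hν hx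
    rwa [hf, abs_mul, abs_neg_one_pow, one_mul, abs_of_nonneg h0]
  have hfq : Summable fun j => (z / (1 - z)) ^ (j + 1) * |f j| :=
    .of_nonneg_of_le (fun j => by positivity)
      (fun j => mul_le_of_le_one_right (by positivity) (hf1 j))
      ((summable_nat_add_iff 1).2 (summable_geometric_of_lt_one hq0 hq))
  simpa only [hf, neg_mul, mul_assoc, mul_left_comm] using
    (hasSum_pow_mul_tsum_poisson_mul_sum_choose hα hu hfq).tsum_eq
end

section
/- Let λ_α, λ_β > 0 with λ_β < λ_α, and let k ≥ 1 and r ≥ 0 be integers. Then Σ_{m=0}^∞ (−1)^m (λ_β/λ_α)^{k+m} · (k+m+r−1)! / (r! · m! · (k−1)!) = C(k+r−1, r) · (λ_α/(λ_α+λ_β))^r · (λ_β/(λ_α+λ_β))^k; that is, for ν = 1 the distribution of N_α(τ_k^1) is negative binomial with parameters k and λ_α/(λ_α+λ_β). -/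
open Real

/-!
The factor `(k+m+r-1)! / (r! m! (k-1)!)` is a multinomial coefficient; splitting it into binomial
coefficients takes a factor `C(k+r-1, r)` out of the series and leaves Newton's binomial series for
`(1 + x)⁻⁽ᵏ⁺ʳ⁾` at the ratio `x = λ_β/λ_α`.
-/

section

open scoped Nat

theorem factorial_add_add_div_eq_choose_mul_choose (K : Type*) [DivisionSemiring K] [CharZero K]
    (j m r : ℕ) :
    ((j + m + r)! : K) / (r ! * m ! * j !) = (j + r).choose r * (m + (j + r)).choose (j + r) := by
  have factorial_eq : (j + m + r)! =
      (j + r).choose r * (m + (j + r)).choose (j + r) * (r ! * m ! * j !) := by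
    calc (j + m + r)! = (m + (j + r)).choose (j + r) * m ! * (j + r)! := by
          rw [Nat.add_choose_mul_factorial_mul_factorial, add_left_comm, add_assoc]
      _ = (m + (j + r)).choose (j + r) * m ! * ((j + r).choose r * j ! * r !) := by
          rw [Nat.add_choose_mul_factorial_mul_factorial j r]
      _ = (j + r).choose r * (m + (j + r)).choose (j + r) * (r ! * m ! * j !) := by ring
  rw [div_eq_iff (by exact_mod_cast (by positivity : r ! * m ! * j ! ≠ 0))]
  exact_mod_cast factorial_eq

theorem hasSum_neg_one_pow_mul_choose_mul_pow {R : Type*} [NormedDivisionRing R] (n : ℕ) {x : R}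
    (hx : ‖x‖ < 1) :
    HasSum (fun m : ℕ ↦ (-1) ^ m * ((m + n).choose n : R) * x ^ m) (1 / (1 + x) ^ (n + 1)) := by
  have hasSum_neg := hasSum_choose_mul_geometric_of_norm_lt_one n (r := -x) (by rwa [norm_neg])
  rw [sub_neg_eq_add] at hasSum_neg
  refine hasSum_neg.congr_fun fun m ↦ ?_
  rw [neg_pow x, ← mul_assoc, Nat.cast_comm]

theorem div_pow_mul_one_div_one_add_div_pow {K : Type*} [Semifield K] {a : K} (ha : a ≠ 0)
    (b : K) (k r : ℕ) :
    (b / a) ^ k * (1 / (1 + b / a) ^ (k + r)) = (a / (a + b)) ^ r * (b / (a + b)) ^ k := by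
  calc (b / a) ^ k * (1 / (1 + b / a) ^ (k + r))
      = (1 / (1 + b / a)) ^ r * (b / a / (1 + b / a)) ^ k := by
        simp only [div_pow, one_pow, pow_add]
        ring
    _ = (a / (a + b)) ^ r * (b / (a + b)) ^ k := by
        rw [one_add_div ha, one_div_div, div_div_div_cancel_right₀ ha]

theorem poisson_at_erlang_negative_binomial_general {𝕜 : Type*} [NormedField 𝕜] [CharZero 𝕜]
    {a b : 𝕜} (hba : ‖b‖ < ‖a‖) {k : ℕ} (hk : 1 ≤ k) (r : ℕ) :
    HasSum
      (fun m : ℕ ↦ (-1) ^ m * (b / a) ^ (k + m) * ((k + m + r - 1)! : 𝕜) / (r ! * m ! * (k - 1)!))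
      ((k + r - 1).choose r * (a / (a + b)) ^ r * (b / (a + b)) ^ k) := by
  obtain ⟨j, rfl⟩ := Nat.exists_eq_add_of_le' hk
  have norm_a_pos : 0 < ‖a‖ := (norm_nonneg b).trans_lt hba
  have norm_ratio_lt_one : ‖b / a‖ < 1 := by rwa [norm_div, div_lt_one norm_a_pos]
  have term_eq (m : ℕ) :
      (-1) ^ m * (b / a) ^ (j + 1 + m) * ((j + 1 + m + r - 1)! : 𝕜) / (r ! * m ! * (j + 1 - 1)!) =
        (j + r).choose r * (b / a) ^ (j + 1) *
          ((-1) ^ m * (m + (j + r)).choose (j + r) * (b / a) ^ m) := by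
    rw [show j + 1 + m + r - 1 = j + m + r by lia, Nat.add_sub_cancel, mul_div_assoc,
      factorial_add_add_div_eq_choose_mul_choose]
    ring
  have sum_eq :
      ((j + 1 + r - 1).choose r : 𝕜) * (a / (a + b)) ^ r * (b / (a + b)) ^ (j + 1) =
        (j + r).choose r * (b / a) ^ (j + 1) * (1 / (1 + b / a) ^ (j + r + 1)) := by
    rw [show j + 1 + r - 1 = j + r by lia, mul_assoc, mul_assoc, add_right_comm j r 1,
      div_pow_mul_one_div_one_add_div_pow (norm_pos_iff.mp norm_a_pos)]
  simp only [term_eq, sum_eq]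
  exact (hasSum_neg_one_pow_mul_choose_mul_pow (j + r) norm_ratio_lt_one).mul_left _

end

/-- for `ν = 1` the distribution of `N_α(τ_k^1)` is negative binomial with
parameters `k` and `λ_α/(λ_α+λ_β)`:
`Σ_m (−1)^m (λ_β/λ_α)^{k+m} (k+m+r−1)!/(r! m! (k−1)!)
 = C(k+r−1,r) (λ_α/(λ_α+λ_β))^r (λ_β/(λ_α+λ_β))^k`. -/
theorem poisson_at_erlang_negative_binomial (lα lβ : ℝ) (hα : 0 < lα) (hβ : 0 < lβ)
    (hlt : lβ < lα) (k r : ℕ) (hk : 1 ≤ k) :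
    ∑' m : ℕ, (-1 : ℝ) ^ m * (lβ / lα) ^ (k + m) *
      (Nat.factorial (k + m + r - 1) : ℝ) /
        ((Nat.factorial r : ℝ) * (Nat.factorial m : ℝ) * (Nat.factorial (k - 1) : ℝ)) =
    ((k + r - 1).choose r : ℝ) * (lα / (lα + lβ)) ^ r * (lβ / (lα + lβ)) ^ k := by
  have norm_lt : ‖lβ‖ < ‖lα‖ := by rwa [norm_of_nonneg hβ.le, norm_of_nonneg hα.le]
  exact (poisson_at_erlang_negative_binomial_general norm_lt hk r).tsum_eq
end

section
/- Let ν ∈ (0,1], λ > 0 and a > 0 with a^ν > λ, and define the two-parameter Mittag–Leffler function E_{ν,ν}(z) = Σ_{n=0}^∞ z^n / Γ(ν n + ν). Then the Laplace transform of the Mittag–Leffler waiting-time density satisfies ∫_0^∞ e^{−a s} · λ s^{ν−1} E_{ν,ν}(−λ s^ν) ds = λ / (a^ν + λ). -/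
open Real

/-- The two-parameter Mittag–Leffler function `E_{ν,ν}(z) = Σ_{n=0}^∞ z^n / Γ(νn + ν)`. -/
noncomputable def mittagLeffler2 (ν z : ℝ) : ℝ :=
  ∑' n : ℕ, z ^ n / Real.Gamma (ν * n + ν)

/-!
Expanding the Mittag–Leffler function makes the density `Σ λ (-λ)ⁿ s^(νn+ν-1) / Γ(νn+ν)`. Since
the Laplace transform of `s^(p-1) / Γ(p)` is `a^(-p)`, integrating term by term turns this into a
geometric series of ratio `-λ / a^ν`, whose absolute convergence is also what justifies the
interchange of sum and integral.
-/

open MeasureTheory Set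

section Laplace

variable {a : ℝ}

lemma integral_exp_neg_mul_mul_rpow_div_Gamma {p : ℝ} (hp : 0 < p) (ha : 0 < a) :
    ∫ s in Ioi (0 : ℝ), exp (-a * s) * (s ^ (p - 1) / Gamma p) = a ^ (-p) := by
  have hΓ : Gamma p ≠ 0 := (Gamma_pos_of_pos hp).ne'
  calc ∫ s in Ioi (0 : ℝ), exp (-a * s) * (s ^ (p - 1) / Gamma p)
      = ∫ s in Ioi (0 : ℝ), s ^ (p - 1) * exp (-(a * s)) / Gamma p := by
        congr 1 with s
        rw [neg_mul]
        ring
    _ = a ^ (-p) := by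
        rw [integral_div, integral_rpow_mul_exp_neg_mul_Ioi hp ha, mul_div_cancel_right₀ _ hΓ,
          one_div, inv_rpow ha.le, rpow_neg ha.le]

lemma integrableOn_exp_neg_mul_mul_rpow_div_Gamma {p : ℝ} (hp : 0 < p) (ha : 0 < a) :
    IntegrableOn (fun s : ℝ => exp (-a * s) * (s ^ (p - 1) / Gamma p)) (Ioi 0) := by
  refine Integrable.of_integral_ne_zero ?_
  rw [integral_exp_neg_mul_mul_rpow_div_Gamma hp ha]
  positivity

lemma hasSum_integral_exp_neg_mul_smul_tsum_rpow_div_Gamma_smul {ι E : Type*} [Countable ι]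
    [NormedAddCommGroup E] [NormedSpace ℝ E] [CompleteSpace E] {p : ι → ℝ} {c : ι → E}
    (hp : ∀ i, 0 < p i) (ha : 0 < a) (hc : Summable fun i => a ^ (-p i) * ‖c i‖) :
    HasSum (fun i => a ^ (-p i) • c i)
      (∫ s in Ioi (0 : ℝ), exp (-a * s) • ∑' i, (s ^ (p i - 1) / Gamma (p i)) • c i) := by
  have norm_integral (i : ι) :
      ∫ s in Ioi (0 : ℝ), ‖(exp (-a * s) * (s ^ (p i - 1) / Gamma (p i))) • c i‖ =
        a ^ (-p i) * ‖c i‖ := by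
    rw [← integral_exp_neg_mul_mul_rpow_div_Gamma (hp i) ha, ← integral_mul_const]
    refine setIntegral_congr_fun measurableSet_Ioi fun s (hs : 0 < s) => ?_
    have hΓ := Gamma_pos_of_pos (hp i)
    simp only [norm_smul]
    rw [norm_of_nonneg (by positivity)]
  have hsum := hasSum_integral_of_summable_integral_norm
    (fun i => (integrableOn_exp_neg_mul_mul_rpow_div_Gamma (hp i) ha).smul_const (c i))
    (by simpa only [norm_integral] using hc)
  simp only [integral_smul_const, integral_exp_neg_mul_mul_rpow_div_Gamma (hp _) ha] at hsum
  simpa only [mul_smul, tsum_const_smul''] using hsum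

end Laplace

section MittagLeffler

variable {ν c a : ℝ}

lemma rpow_sub_one_mul_mittagLeffler2 {s : ℝ} (hs : 0 < s) :
    s ^ (ν - 1) * mittagLeffler2 ν (c * s ^ ν) =
      ∑' n : ℕ, s ^ (ν * n + ν - 1) / Gamma (ν * n + ν) * c ^ n := by
  rw [mittagLeffler2, ← tsum_mul_left]
  refine tsum_congr fun n => ?_
  rw [add_sub_assoc, rpow_add hs, rpow_mul_natCast hs.le, mul_pow]
  ring

lemma hasSum_rpow_neg_mul_pow (ha : 0 < a) (hc : |c| < a ^ ν) :
    HasSum (fun n : ℕ => a ^ (-(ν * n + ν)) * c ^ n) (a ^ ν - c)⁻¹ := by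
  have haν : 0 < a ^ ν := rpow_pos_of_pos ha ν
  have hratio : |c / a ^ ν| < 1 := by rwa [abs_div, abs_of_pos haν, div_lt_one haν]
  have hterm (n : ℕ) : a ^ (-(ν * n + ν)) * c ^ n = (a ^ ν)⁻¹ * (c / a ^ ν) ^ n := by
    rw [rpow_neg ha.le, rpow_add ha, rpow_mul_natCast ha.le, div_pow]
    ring
  have hlimit : (a ^ ν - c)⁻¹ = (a ^ ν)⁻¹ * (1 - c / a ^ ν)⁻¹ := by
    rw [← mul_inv, mul_one_sub, mul_div_cancel₀ _ haν.ne']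
  simpa only [hterm, hlimit] using
    (hasSum_geometric_of_abs_lt_one hratio).mul_left (a ^ ν)⁻¹

lemma integral_exp_neg_mul_mul_rpow_mul_mittagLeffler2 (hν : 0 < ν) (ha : 0 < a)
    (hc : |c| < a ^ ν) :
    ∫ s in Ioi (0 : ℝ), exp (-a * s) * (s ^ (ν - 1) * mittagLeffler2 ν (c * s ^ ν)) =
      (a ^ ν - c)⁻¹ := by
  have hsummable : Summable fun n : ℕ => a ^ (-(ν * n + ν)) * ‖c ^ n‖ := by
    simpa only [norm_pow, norm_eq_abs] using
      (hasSum_rpow_neg_mul_pow ha (by rwa [abs_abs])).summable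
  calc ∫ s in Ioi (0 : ℝ), exp (-a * s) * (s ^ (ν - 1) * mittagLeffler2 ν (c * s ^ ν))
      = ∫ s in Ioi (0 : ℝ), exp (-a * s) *
          ∑' n : ℕ, s ^ (ν * n + ν - 1) / Gamma (ν * n + ν) * c ^ n :=
        setIntegral_congr_fun measurableSet_Ioi fun s hs => by
          simp only [rpow_sub_one_mul_mittagLeffler2 hs]
    _ = (a ^ ν - c)⁻¹ :=
        (hasSum_integral_exp_neg_mul_smul_tsum_rpow_div_Gamma_smul
          (fun n : ℕ => by positivity) ha hsummable).unique (hasSum_rpow_neg_mul_pow ha hc)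

end MittagLeffler

theorem laplace_mittag_leffler_density_general {ν lam a : ℝ} (hν : 0 < ν) (ha : 0 < a)
    (hcond : |lam| < a ^ ν) :
    ∫ s in Ioi (0 : ℝ), exp (-a * s) * (lam * s ^ (ν - 1) * mittagLeffler2 ν (-lam * s ^ ν)) =
      lam / (a ^ ν + lam) := by
  simp only [mul_assoc lam, mul_left_comm _ lam]
  rw [integral_const_mul, integral_exp_neg_mul_mul_rpow_mul_mittagLeffler2 hν ha
    (by rwa [abs_neg]), sub_neg_eq_add, div_eq_mul_inv]

/-- the Laplace transform of the Mittag–Leffler waiting-time density: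
`∫_0^∞ e^{−as} λ s^{ν−1} E_{ν,ν}(−λs^ν) ds = λ/(a^ν + λ)` for `a^ν > λ`. -/
theorem laplace_mittag_leffler_density (ν lam a : ℝ) (hν : ν ∈ Set.Ioc (0 : ℝ) 1)
    (hl : 0 < lam) (ha : 0 < a) (hcond : lam < a ^ ν) :
    ∫ s in Set.Ioi (0 : ℝ),
      Real.exp (-a * s) * (lam * s ^ (ν - 1) * mittagLeffler2 ν (-lam * s ^ ν)) =
    lam / (a ^ ν + lam) :=
  laplace_mittag_leffler_density_general hν.1 ha (by rwa [abs_of_pos hl])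
end
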